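/- arXiv:0910.2013 — 2 statements merged into one kernel-verified Lean document; each statement's English description precedes it below -/
import Mathlib

section
/- Assume φ''_F > 0, φ''_{2F} ≤ 0, and A_F > 0. Suppose L^{−1} L^qcf = Ṽ Λ̃ Ṽ^{−1}, where Ṽ : U → U is invertible and Λ̃ is diagonal with real diagonal entries whose multiset coincides with the set of generalized eigenvalues μ of L^qnl v = μ L v (counted with multiplicity). Then for every m ∈ ℕ and every r⁰ ∈ U, min{ ‖p(L^{−1} L^qcf) L^{−1} r⁰‖_{U^{1,2}} : p a real polynomial, deg p ≤ m, p(0) = 1 } ≤ 2 κ(L^{1/2} Ṽ) ((1 − √(A_F/φ''_F)) / (1 + √(A_F/φ''_F)))^m ‖L^{−1} r⁰‖_{U^{1,2}}, where L^{1/2} is the positive definite square root of L and κ(W) = ‖W‖ ‖W^{−1}‖ is the condition number in the ℓ²_ε operator norm. -/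
/-!
Write `G = L⁻¹ L^qcf = V Λ V⁻¹` and `W = L^{1/2} V`. Summation by parts gives
`⟨L v, v⟩ = ‖v‖²_{U^{1,2}}` (`ipE_lap`), so `‖v‖_{U^{1,2}} = ‖L^{1/2} v‖`, and for every polynomial `p`
`L^{1/2} p(G) w = W p(Λ) W⁻¹ (L^{1/2} w)`.
Hence `‖p(G) w‖_{U^{1,2}} ≤ κ(W) · max_j |p(λ_j)| · ‖w‖_{U^{1,2}}`.

Each diagonal entry `λ_j` is a Rayleigh quotient `⟨L^qnl v, v⟩ / ⟨L v, v⟩`. Since `φ''_{2F} ≤ 0`,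
the inequality `(x - y)² ≤ 2 x² + 2 y²` applied to the second-difference term (`Bqnl_bounds`) shows
`A_F ≤ λ_j ≤ A_F - 4 φ''_{2F} = φ''_F`.
On this interval a rescaled Chebyshev polynomial with `p(0) = 1` is bounded by `2 q ^ m`, where
`q = (1 - √(A_F/φ''_F)) / (1 + √(A_F/φ''_F))` (`exists_cheb`); it is a competitor in the minimum.
-/

open Finset

noncomputable section

attribute [local instance] Classical.propDecidable

/-- lattice spacing ε = 1/N -/
def eps (N : ℕ) : ℝ := 1 / N

/-- the displacement space U as a submodule of ℤ → ℝ -/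
def Usub (N : ℕ) : Submodule ℝ (ℤ → ℝ) where
  carrier := {u | ∀ j : ℤ, ((N : ℤ) ≤ j ∨ j ≤ -(N : ℤ)) → u j = 0}
  add_mem' := by
    intro a b ha hb j hj
    simp [Pi.add_apply, ha j hj, hb j hj]
  zero_mem' := by intro j hj; rfl
  smul_mem' := by
    intro c a ha j hj
    simp [Pi.smul_apply, ha j hj]

lemma mem_Usub {N : ℕ} {u : ℤ → ℝ} :
    u ∈ Usub N ↔ ∀ j : ℤ, ((N : ℤ) ≤ j ∨ j ≤ -(N : ℤ)) → u j = 0 := Iff.rfl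

/-- backward first difference -/
def D1 (N : ℕ) (u : ℤ → ℝ) (ℓ : ℤ) : ℝ := (u ℓ - u (ℓ - 1)) / eps N

/-- the ℓ²_ε inner product -/
def ipE (N : ℕ) (v w : ℤ → ℝ) : ℝ :=
  eps N * ∑ ℓ ∈ Icc (-(N : ℤ) + 1) (N : ℤ), v ℓ * w ℓ

/-- the ℓ²_ε norm -/
def normE (N : ℕ) (v : ℤ → ℝ) : ℝ :=
  Real.sqrt (eps N * ∑ ℓ ∈ Icc (-(N : ℤ) + 1) (N : ℤ), (v ℓ) ^ 2)

/-- the ℓ²_ε operator norm of an endomorphism of U -/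
def opNormE (N : ℕ) (f : ↥(Usub N) →ₗ[ℝ] ↥(Usub N)) : ℝ :=
  sSup ((fun v : ↥(Usub N) => normE N ((f v : ℤ → ℝ))) ''
    {v : ↥(Usub N) | normE N (v : ℤ → ℝ) = 1})

/-- the QNL bilinear form -/
def Bqnl (N K : ℕ) (φF φ2F : ℝ) (u v : ℤ → ℝ) : ℝ :=
  (φF + 4 * φ2F) * (eps N * ∑ ℓ ∈ Icc (-(N : ℤ) + 1) (N : ℤ), D1 N u ℓ * D1 N v ℓ)
    - φ2F * (eps N * ∑ ℓ ∈ Icc (-(K : ℤ)) (K : ℤ),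
        (D1 N u (ℓ + 1) - D1 N u ℓ) * (D1 N v (ℓ + 1) - D1 N v ℓ))

/-- the linearized force-based quasicontinuum operator, pointwise -/
def lqcfFun (N K : ℕ) (φF φ2F : ℝ) (v : ℤ → ℝ) (j : ℤ) : ℝ :=
  if -(N : ℤ) + 1 ≤ j ∧ j ≤ (N : ℤ) - 1 then
    if -(K : ℤ) ≤ j ∧ j ≤ (K : ℤ) then
      φF * (-v (j + 1) + 2 * v j - v (j - 1)) / (eps N) ^ 2
        + φ2F * (-v (j + 2) + 2 * v j - v (j - 2)) / (eps N) ^ 2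
    else
      (φF + 4 * φ2F) * (-v (j + 1) + 2 * v j - v (j - 1)) / (eps N) ^ 2
  else 0

/-- L^qcf as a linear map on ℤ → ℝ -/
def lqcfLin (N K : ℕ) (φF φ2F : ℝ) : (ℤ → ℝ) →ₗ[ℝ] (ℤ → ℝ) where
  toFun v := lqcfFun N K φF φ2F v
  map_add' u v := by
    funext j
    simp only [lqcfFun, Pi.add_apply]
    split_ifs <;> ring
  map_smul' c v := by
    funext j
    simp only [lqcfFun, Pi.smul_apply, smul_eq_mul, RingHom.id_apply]
    split_ifs <;> ring

lemma lqcf_mem (N K : ℕ) (φF φ2F : ℝ) (v : ℤ → ℝ) :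
    lqcfLin N K φF φ2F v ∈ Usub N := by
  rw [mem_Usub]
  intro j hj
  show lqcfFun N K φF φ2F v j = 0
  unfold lqcfFun
  rw [if_neg (by omega)]

/-- L^qcf as an endomorphism of U -/
def LqcfE (N K : ℕ) (φF φ2F : ℝ) : Module.End ℝ ↥(Usub N) :=
  (lqcfLin N K φF φ2F).restrict (fun v _ => lqcf_mem N K φF φ2F v)

/-- the discrete Laplacian, pointwise -/
def lapFun (N : ℕ) (v : ℤ → ℝ) (j : ℤ) : ℝ :=
  if -(N : ℤ) + 1 ≤ j ∧ j ≤ (N : ℤ) - 1 then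
    (-v (j + 1) + 2 * v j - v (j - 1)) / (eps N) ^ 2
  else 0

/-- the discrete Laplacian as a linear map on ℤ → ℝ -/
def lapLin (N : ℕ) : (ℤ → ℝ) →ₗ[ℝ] (ℤ → ℝ) where
  toFun v := lapFun N v
  map_add' u v := by
    funext j
    simp only [lapFun, Pi.add_apply]
    split_ifs <;> ring
  map_smul' c v := by
    funext j
    simp only [lapFun, Pi.smul_apply, smul_eq_mul, RingHom.id_apply]
    split_ifs <;> ring

lemma lap_mem (N : ℕ) (v : ℤ → ℝ) : lapLin N v ∈ Usub N := by
  rw [mem_Usub]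
  intro j hj
  show lapFun N v j = 0
  unfold lapFun
  rw [if_neg (by omega)]

/-- the discrete Laplacian as an endomorphism of U -/
def LapE (N : ℕ) : Module.End ℝ ↥(Usub N) :=
  (lapLin N).restrict (fun v _ => lap_mem N v)

/-- the U^{1,2} norm ‖v‖_{U^{1,2}} = (ε Σ (v'_ℓ)²)^{1/2} -/
def norm1 (N : ℕ) (v : ℤ → ℝ) : ℝ :=
  Real.sqrt (eps N * ∑ ℓ ∈ Icc (-(N : ℤ) + 1) (N : ℤ), (D1 N v ℓ) ^ 2)

/-! ### Chebyshev polynomials -/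

/-- The Joukowski form of `T_m` outside `[-1, 1]`. -/
lemma cheb_T_joukowski (q : ℝ) (hq : q ≠ 0) (m : ℕ) :
    (Polynomial.Chebyshev.T ℝ m).eval ((q + q⁻¹) / 2) = (q ^ m + (q⁻¹) ^ m) / 2 := by
  induction m using Nat.twoStepInduction with
  | zero => simp
  | one => simp
  | more n h0 h1 =>
    have h := Polynomial.Chebyshev.T_add_two ℝ (n : ℤ)
    push_cast at h1 ⊢
    rw [h, Polynomial.eval_sub, Polynomial.eval_mul, Polynomial.eval_mul, Polynomial.eval_X,
      h0, h1]
    have h2 : q * q⁻¹ = 1 := mul_inv_cancel₀ hq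
    simp only [Polynomial.eval_ofNat]
    linear_combination (q ^ n / 2 + (q⁻¹) ^ n / 2) * h2

/-- The classical Chebyshev bound on `[a, b]` for polynomials normalized at `0`. -/
lemma exists_cheb (a b : ℝ) (ha : 0 < a) (hab : a ≤ b) (m : ℕ) :
    ∃ p : Polynomial ℝ, p.natDegree ≤ m ∧ p.eval 0 = 1 ∧
      ∀ x, a ≤ x → x ≤ b →
        |p.eval x| ≤ 2 * ((1 - Real.sqrt (a / b)) / (1 + Real.sqrt (a / b))) ^ m := by
  have hb : 0 < b := ha.trans_le hab
  rcases hab.eq_or_lt with rfl | hlt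
  · -- The interval is a point and `q = 0`, so for `m ≥ 1` the polynomial has to vanish there.
    rcases Nat.eq_zero_or_pos m with rfl | hm
    · exact ⟨1, by simp, by simp, fun x _ _ => by simp⟩
    · refine ⟨1 - Polynomial.C a⁻¹ * Polynomial.X, ?_, by simp, ?_⟩
      · refine (Polynomial.natDegree_sub_le _ _).trans ?_
        refine max_le (by simp)
          (((Polynomial.natDegree_C_mul_le _ _).trans Polynomial.natDegree_X_le).trans hm)
      · intro x h1 h2
        obtain rfl : x = a := le_antisymm h2 h1
        simp [hb.ne', hm.ne']
  · set s := Real.sqrt (a / b) with hs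
    have hs2 : s ^ 2 = a / b := Real.sq_sqrt (by positivity)
    have hs0 : 0 < s := Real.sqrt_pos.2 (by positivity)
    have hs1 : s < 1 := by
      have : a / b < 1 := (div_lt_one hb).2 hlt
      nlinarith
    have ha' : a = s ^ 2 * b := by rw [hs2]; field_simp
    set q := (1 - s) / (1 + s) with hq
    have hq0 : 0 < q := div_pos (by linarith) (by linarith)
    have hbs : b - a ≠ 0 := by linarith
    -- The image of `0` under the affine map taking `[a, b]` to `[-1, 1]`, in Joukowski form.
    have hJ : (b + a) / (b - a) = (q + q⁻¹) / 2 := by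
      have h1 : 1 - s ≠ 0 := by linarith
      have h2 : 1 + s ≠ 0 := by linarith
      have h3 : 1 - s ^ 2 ≠ 0 := by nlinarith
      have h4 : b - s ^ 2 * b ≠ 0 := by rw [← ha']; exact hbs
      rw [hq, inv_div, ha', div_add_div _ _ h2 h1, div_div, div_eq_div_iff h4 (by positivity)]
      ring
    have hT := cheb_T_joukowski q hq0.ne' m
    rw [← hJ] at hT
    set t := (Polynomial.Chebyshev.T ℝ m).eval ((b + a) / (b - a)) with ht
    have htl : (q⁻¹) ^ m / 2 ≤ t := by
      rw [hT]
      have : 0 < q ^ m := by positivity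
      linarith
    have ht0 : 0 < t := lt_of_lt_of_le (by positivity) htl
    set l : Polynomial ℝ :=
      Polynomial.C ((b + a) / (b - a)) - Polynomial.C (2 / (b - a)) * Polynomial.X with hl
    refine ⟨Polynomial.C t⁻¹ * (Polynomial.Chebyshev.T ℝ m).comp l, ?_, ?_, ?_⟩
    · refine (Polynomial.natDegree_C_mul_le _ _).trans ?_
      refine Polynomial.natDegree_comp_le.trans ?_
      have hdl : l.natDegree ≤ 1 := by
        refine (Polynomial.natDegree_sub_le _ _).trans ?_
        exact max_le (by simp) ((Polynomial.natDegree_C_mul_le _ _).trans Polynomial.natDegree_X_le)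
      have hdT : (Polynomial.Chebyshev.T ℝ m).natDegree = m := by
        simp [Polynomial.Chebyshev.natDegree_T]
      rw [hdT]
      nlinarith
    · have : l.eval 0 = (b + a) / (b - a) := by simp [hl]
      rw [Polynomial.eval_mul, Polynomial.eval_C, Polynomial.eval_comp, this, ← ht]
      exact inv_mul_cancel₀ ht0.ne'
    · intro x h1 h2
      have hlx : l.eval x = (b + a - 2 * x) / (b - a) := by
        simp [hl]; ring
      have habs : |l.eval x| ≤ 1 := by
        have hp : 0 < b - a := by linarith
        rw [hlx, abs_le]
        constructor
        · rw [le_div_iff₀ hp]; linarith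
        · rw [div_le_iff₀ hp]; linarith
      rw [Polynomial.eval_mul, Polynomial.eval_C, Polynomial.eval_comp, abs_mul,
        abs_of_pos (inv_pos.2 ht0)]
      have hc := Polynomial.Chebyshev.abs_eval_T_real_le_one (m : ℤ) habs
      have hti : t⁻¹ ≤ 2 * q ^ m := by
        rw [inv_le_comm₀ ht0 (by positivity)]
        refine le_trans (le_of_eq ?_) htl
        rw [inv_pow, mul_inv]; ring
      calc t⁻¹ * |(Polynomial.Chebyshev.T ℝ m).eval (l.eval x)| ≤ t⁻¹ * 1 := by gcongr
        _ ≤ 2 * q ^ m := by simpa using hti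

/-! ### Summation by parts and the Rayleigh quotient -/

lemma sum_telescope (f : ℤ → ℝ) (a : ℤ) (n : ℕ) :
    ∑ l ∈ Icc (a + 1) (a + n), (f (l - 1) - f l) = f a - f (a + n) := by
  induction n with
  | zero => simp
  | succ n ih =>
    have h : Icc (a + 1) (a + ((n + 1 : ℕ) : ℤ)) = insert (a + n + 1) (Icc (a + 1) (a + n)) := by
      ext x; simp only [mem_Icc, mem_insert]; push_cast; omega
    rw [h, sum_insert (by simp), ih]
    push_cast
    rw [← add_assoc, add_sub_cancel_right]
    ring

lemma eps_pos {N : ℕ} (hN : 2 ≤ N) : 0 < eps N := by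
  unfold eps
  have : (0 : ℝ) < N := by exact_mod_cast (by omega : 0 < N)
  positivity

/-- Summation by parts: `⟨L v, v⟩ = ‖v‖²_{U^{1,2}}`. The summands differ by the increment of
`v_l v_{l+1} - v_l²`, which vanishes at both ends `±N`. -/
lemma ipE_lap (N : ℕ) (v : ↥(Usub N)) :
    ipE N ((LapE N v : ℤ → ℝ)) (v : ℤ → ℝ)
      = eps N * ∑ l ∈ Icc (-(N : ℤ) + 1) (N : ℤ), (D1 N (v : ℤ → ℝ) l) ^ 2 := by
  have hv := mem_Usub.1 v.2
  set w : ℤ → ℝ := (v : ℤ → ℝ) with hw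
  have hL : ((LapE N v : ↥(Usub N)) : ℤ → ℝ) = lapFun N w := rfl
  rw [hL]
  unfold ipE
  congr 1
  have htel := sum_telescope (fun l => w l * w (l + 1) - w l ^ 2) (-(N : ℤ)) (2 * N)
  have hend : -(N : ℤ) + ((2 * N : ℕ) : ℤ) = N := by push_cast; ring
  rw [hend, hv (-(N : ℤ)) (by omega), hv N (by omega)] at htel
  rw [← sub_eq_zero, ← sum_sub_distrib]
  have : ∀ l ∈ Icc (-(N : ℤ) + 1) (N : ℤ), lapFun N w l * w l - D1 N w l ^ 2
      = ((fun l => w l * w (l + 1) - w l ^ 2) (l - 1) - (fun l => w l * w (l + 1) - w l ^ 2) l)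
        * (1 / eps N ^ 2) := by
    intro l hl
    rw [mem_Icc] at hl
    -- At `l = N` the operator is truncated to `0`, which is harmless because `v_N = 0`.
    have h1 : lapFun N w l * w l = (-w (l + 1) + 2 * w l - w (l - 1)) / (eps N) ^ 2 * w l := by
      unfold lapFun
      split_ifs with h
      · rfl
      · rw [hv l (by omega)]; simp
    rw [h1]
    simp only [D1, sub_add_cancel, div_pow]
    ring
  rw [sum_congr rfl this, ← sum_mul, htel]
  simp

/-- Spectral equivalence of `L^qnl` and `L`: `A_F ‖v‖² ≤ ⟨L^qnl v, v⟩ ≤ φ''_F ‖v‖²` in the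
`U^{1,2}` norm. Since `K ≤ N - 2`, all differences in the interaction term lie in the domain. -/
lemma Bqnl_bounds (N K : ℕ) (hN : 2 ≤ N) (hK2 : (K : ℤ) ≤ (N : ℤ) - 2)
    (φF φ2F : ℝ) (h2F : φ2F ≤ 0) (v : ℤ → ℝ) :
    (φF + 4 * φ2F) * (eps N * ∑ l ∈ Icc (-(N : ℤ) + 1) (N : ℤ), (D1 N v l) ^ 2)
        ≤ Bqnl N K φF φ2F v v ∧
      Bqnl N K φF φ2F v v
        ≤ φF * (eps N * ∑ l ∈ Icc (-(N : ℤ) + 1) (N : ℤ), (D1 N v l) ^ 2) := by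
  have he := eps_pos hN
  set d := D1 N v with hd
  set S := ∑ l ∈ Icc (-(N : ℤ) + 1) (N : ℤ), d l ^ 2 with hS
  set Q := ∑ l ∈ Icc (-(K : ℤ)) (K : ℤ), (d (l + 1) - d l) ^ 2 with hQ
  have hB : Bqnl N K φF φ2F v v = (φF + 4 * φ2F) * (eps N * S) - φ2F * (eps N * Q) := by
    simp only [Bqnl, hS, hQ, pow_two, hd]
  have hQ0 : 0 ≤ Q := sum_nonneg fun _ _ => sq_nonneg _
  have hA : ∑ l ∈ Icc (-(K : ℤ)) (K : ℤ), d l ^ 2 ≤ S := by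
    refine sum_le_sum_of_subset_of_nonneg ?_ (fun _ _ _ => sq_nonneg _)
    exact Icc_subset_Icc (by omega) (by omega)
  have hA' : ∑ l ∈ Icc (-(K : ℤ)) (K : ℤ), d (l + 1) ^ 2 ≤ S := by
    have himg : ∑ l ∈ Icc (-(K : ℤ)) (K : ℤ), d (l + 1) ^ 2
        = ∑ l ∈ (Icc (-(K : ℤ)) (K : ℤ)).image (fun l => l + 1), d l ^ 2 := by
      rw [sum_image]
      intro x _ y _ h
      simpa using h
    rw [himg]
    refine sum_le_sum_of_subset_of_nonneg ?_ (fun _ _ _ => sq_nonneg _)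
    intro x hx
    simp only [mem_image, mem_Icc] at hx ⊢
    obtain ⟨y, hy, rfl⟩ := hx
    omega
  have hQS : Q ≤ 4 * S := by
    have : Q ≤ ∑ l ∈ Icc (-(K : ℤ)) (K : ℤ), (2 * d (l + 1) ^ 2 + 2 * d l ^ 2) := by
      refine sum_le_sum fun l _ => ?_
      nlinarith [sq_nonneg (d (l + 1) + d l)]
    rw [sum_add_distrib, ← mul_sum, ← mul_sum] at this
    linarith
  have h1 : 0 ≤ eps N * Q := by positivity
  have h2 : eps N * Q ≤ eps N * (4 * S) := by gcongr
  rw [hB]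
  constructor <;> nlinarith

/-! ### The discrete norm and operator norm -/

lemma normE_sq {N : ℕ} (hN : 2 ≤ N) (v : ℤ → ℝ) : normE N v ^ 2 = ipE N v v := by
  unfold normE ipE
  rw [Real.sq_sqrt]
  · simp only [pow_two]
  · have := eps_pos hN
    positivity

lemma normE_nonneg (N : ℕ) (v : ℤ → ℝ) : 0 ≤ normE N v := Real.sqrt_nonneg _

lemma normE_smul (N : ℕ) (c : ℝ) (v : ℤ → ℝ) : normE N (c • v) = |c| * normE N v := by
  unfold normE
  simp only [Pi.smul_apply, smul_eq_mul, mul_pow, ← mul_sum]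
  rw [mul_left_comm, Real.sqrt_mul (sq_nonneg c), Real.sqrt_sq_eq_abs]

/-- Coordinates scaled by `√ε`, turning the `ℓ²_ε` norm on `U` into the Euclidean one. -/
def toEuc (N : ℕ) : ↥(Usub N) →ₗ[ℝ] EuclideanSpace ℝ ↥(Icc (-(N : ℤ) + 1) (N : ℤ)) where
  toFun u := WithLp.toLp 2 (fun j => Real.sqrt (eps N) * (u : ℤ → ℝ) j)
  map_add' u v := by ext j; simp [mul_add]
  map_smul' c u := by ext j; simp; ring

lemma norm_toEuc {N : ℕ} (hN : 2 ≤ N) (u : ↥(Usub N)) :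
    ‖toEuc N u‖ = normE N (u : ℤ → ℝ) := by
  rw [EuclideanSpace.norm_eq]
  unfold normE
  congr 1
  rw [mul_sum, ← sum_coe_sort (Icc (-(N : ℤ) + 1) (N : ℤ))]
  refine sum_congr rfl fun j _ => ?_
  simp only [toEuc, LinearMap.coe_mk, AddHom.coe_mk, Real.norm_eq_abs, sq_abs, mul_pow]
  rw [Real.sq_sqrt (eps_pos hN).le]

lemma toEuc_injective {N : ℕ} (hN : 2 ≤ N) : Function.Injective (toEuc N) := by
  intro u v huv
  ext j
  by_cases hj : j ∈ Icc (-(N : ℤ) + 1) (N : ℤ)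
  · have := congrArg (fun x => x ⟨j, hj⟩) huv
    have hs := (Real.sqrt_pos.2 (eps_pos hN)).ne'
    simpa [toEuc, hs] using this
  · rw [mem_Icc] at hj
    rw [mem_Usub.1 u.2 j (by omega), mem_Usub.1 v.2 j (by omega)]

lemma normE_pos {N : ℕ} (hN : 2 ≤ N) {u : ↥(Usub N)} (hu : u ≠ 0) :
    0 < normE N (u : ℤ → ℝ) := by
  rw [← norm_toEuc hN, norm_pos_iff]
  exact fun h => hu (toEuc_injective hN (by simpa using h))

/-- Endomorphisms of the finite-dimensional space `U` are bounded, so the supremum defining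
`opNormE` is not the junk value of an unbounded set. -/
lemma exists_bound {N : ℕ} (hN : 2 ≤ N) (f : ↥(Usub N) →ₗ[ℝ] ↥(Usub N)) :
    ∃ C : ℝ, ∀ v : ↥(Usub N), normE N (f v : ℤ → ℝ) ≤ C * normE N (v : ℤ → ℝ) := by
  set e := LinearEquiv.ofInjective (toEuc N) (toEuc_injective hN) with he
  set g := LinearMap.toContinuousLinearMap (toEuc N ∘ₗ f ∘ₗ e.symm.toLinearMap) with hg
  refine ⟨‖g‖, fun v => ?_⟩
  have h := g.le_opNorm (e v)
  have h1 : g (e v) = toEuc N (f v) := by simp [hg]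
  have h2 : ‖e v‖ = ‖toEuc N v‖ := rfl
  rwa [h1, h2, norm_toEuc hN, norm_toEuc hN] at h

lemma opNormE_nonneg (N : ℕ) (f : ↥(Usub N) →ₗ[ℝ] ↥(Usub N)) : 0 ≤ opNormE N f := by
  refine Real.sSup_nonneg ?_
  rintro x ⟨v, _, rfl⟩
  exact normE_nonneg _ _

lemma normE_le_opNormE {N : ℕ} (hN : 2 ≤ N) (f : ↥(Usub N) →ₗ[ℝ] ↥(Usub N))
    (v : ↥(Usub N)) : normE N (f v : ℤ → ℝ) ≤ opNormE N f * normE N (v : ℤ → ℝ) := by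
  obtain ⟨C, hC⟩ := exists_bound hN f
  by_cases hv : v = 0
  · subst hv
    simp [normE]
  · have hp := normE_pos hN hv
    set n := normE N (v : ℤ → ℝ) with hn
    have hunit : normE N ((n⁻¹ • v : ↥(Usub N)) : ℤ → ℝ) = 1 := by
      rw [Submodule.coe_smul, normE_smul, abs_of_pos (inv_pos.2 hp), ← hn]
      exact inv_mul_cancel₀ hp.ne'
    have hbdd : BddAbove ((fun v : ↥(Usub N) => normE N ((f v : ℤ → ℝ))) ''
        {v : ↥(Usub N) | normE N (v : ℤ → ℝ) = 1}) := by
      refine ⟨C, ?_⟩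
      rintro x ⟨w, hw, rfl⟩
      have := hC w
      rw [Set.mem_ofPred_eq] at hw
      rwa [hw, mul_one] at this
    have h := le_csSup hbdd ⟨n⁻¹ • v, hunit, rfl⟩
    have hscaled : n⁻¹ * normE N (f v : ℤ → ℝ) ≤ opNormE N f := by
      refine le_of_eq_of_le ?_ h
      simp only [map_smul, Submodule.coe_smul, normE_smul, abs_of_pos (inv_pos.2 hp)]
    rwa [inv_mul_le_iff₀ hp, mul_comm] at hscaled

/-! ### Polynomials of diagonal and similar operators -/

lemma aeval_diag {N : ℕ} (Λ : Module.End ℝ ↥(Usub N)) (lam : ℤ → ℝ)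
    (hΛ : ∀ u : ↥(Usub N), ∀ j : ℤ, ((Λ u : ℤ → ℝ)) j = lam j * (u : ℤ → ℝ) j)
    (p : Polynomial ℝ) (u : ↥(Usub N)) (j : ℤ) :
    ((Polynomial.aeval Λ p u : ↥(Usub N)) : ℤ → ℝ) j = p.eval (lam j) * (u : ℤ → ℝ) j := by
  induction p using Polynomial.induction_on' with
  | add p q hp hq => simp [hp, hq, add_mul]
  | monomial n a =>
    have hpow : ((Λ ^ n) u : ℤ → ℝ) j = lam j ^ n * (u : ℤ → ℝ) j := by
      induction n with
      | zero => simp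
      | succ n ih => rw [pow_succ', Module.End.mul_apply, hΛ, ih]; ring
    simp only [Polynomial.aeval_monomial, Polynomial.eval_monomial, Module.End.mul_apply,
      Module.algebraMap_end_apply, Submodule.coe_smul, Pi.smul_apply, smul_eq_mul, hpow]
    ring

lemma aeval_conj {N : ℕ} (G Λ : Module.End ℝ ↥(Usub N)) (V : ↥(Usub N) ≃ₗ[ℝ] ↥(Usub N))
    (h : ∀ u, G u = V (Λ (V.symm u))) (p : Polynomial ℝ) (u : ↥(Usub N)) :
    Polynomial.aeval G p u = V (Polynomial.aeval Λ p (V.symm u)) := by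
  induction p using Polynomial.induction_on' with
  | add p q hp hq => simp [hp, hq]
  | monomial n a =>
    have hpow : (G ^ n) u = V ((Λ ^ n) (V.symm u)) := by
      induction n with
      | zero => simp
      | succ n ih =>
        rw [pow_succ', Module.End.mul_apply, ih, h, pow_succ', Module.End.mul_apply,
          V.symm_apply_apply]
    simp only [Polynomial.aeval_monomial, Module.End.mul_apply,
      Module.algebraMap_end_apply, hpow, map_smul]

lemma normE_diag_le {N : ℕ} (hN : 2 ≤ N) (u w : ↥(Usub N)) (c : ℝ) (hc : 0 ≤ c) (d : ℤ → ℝ)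
    (hd : ∀ j ∈ Icc (-(N : ℤ) + 1) ((N : ℤ) - 1), |d j| ≤ c)
    (hw : ∀ j, (w : ℤ → ℝ) j = d j * (u : ℤ → ℝ) j) :
    normE N (w : ℤ → ℝ) ≤ c * normE N (u : ℤ → ℝ) := by
  rw [← abs_of_nonneg hc, ← normE_smul]
  unfold normE
  have he := eps_pos hN
  refine Real.sqrt_le_sqrt (mul_le_mul_of_nonneg_left (sum_le_sum fun j hj => ?_) he.le)
  rw [hw, Pi.smul_apply, smul_eq_mul, mul_pow, mul_pow]
  by_cases hjN : j = N
  · rw [mem_Usub.1 u.2 j (by omega)]; simp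
  · have hdj := hd j (by rw [mem_Icc] at hj ⊢; omega)
    have : d j ^ 2 ≤ c ^ 2 := sq_le_sq' (by linarith [(abs_le.1 hdj).1]) (abs_le.1 hdj).2
    gcongr


/-- Preconditioned GMRES in the U^{1,2} inner product: if L⁻¹L^qcf = Ṽ Λ̃ Ṽ⁻¹ with Λ̃
diagonal whose diagonal entries (with multiplicity) coincide with the generalized
eigenvalues of L^qnl v = μ L v, and L^{1/2} is the positive definite square root of L,
then
min_{deg p ≤ m, p(0)=1} ‖p(L⁻¹L^qcf) L⁻¹r⁰‖_{U^{1,2}}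
  ≤ 2 κ(L^{1/2}Ṽ) ((1 − √(A_F/φ''_F))/(1 + √(A_F/φ''_F)))^m ‖L⁻¹r⁰‖_{U^{1,2}}. -/
theorem stmt14 (N K : ℕ) (hN : 2 ≤ N) (hK1 : 1 ≤ K) (hK2 : (K : ℤ) ≤ (N : ℤ) - 2)
    (φF φ2F : ℝ) (hφF : 0 < φF) (h2F : φ2F ≤ 0) (hAF : 0 < φF + 4 * φ2F)
    (Linv : Module.End ℝ ↥(Usub N))
    (hLinv : Linv * LapE N = 1 ∧ LapE N * Linv = 1)
    (Lhalf : ↥(Usub N) ≃ₗ[ℝ] ↥(Usub N))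
    (hLhalf_sq : Lhalf.toLinearMap ∘ₗ Lhalf.toLinearMap
        = (LapE N : ↥(Usub N) →ₗ[ℝ] ↥(Usub N)))
    (hLhalf_sym : ∀ u v : ↥(Usub N),
        ipE N ((Lhalf u : ℤ → ℝ)) (v : ℤ → ℝ) = ipE N (u : ℤ → ℝ) ((Lhalf v : ℤ → ℝ)))
    (hLhalf_pos : ∀ u : ↥(Usub N), u ≠ 0 → 0 < ipE N ((Lhalf u : ℤ → ℝ)) (u : ℤ → ℝ))
    (T : Module.End ℝ ↥(Usub N))
    (hT : ∀ u v : ↥(Usub N), ipE N ((T u : ℤ → ℝ)) (v : ℤ → ℝ)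
            = Bqnl N K φF φ2F (u : ℤ → ℝ) (v : ℤ → ℝ))
    (V : ↥(Usub N) ≃ₗ[ℝ] ↥(Usub N)) (Λ : Module.End ℝ ↥(Usub N)) (lam : ℤ → ℝ)
    (hΛdiag : ∀ u : ↥(Usub N), ∀ j : ℤ, ((Λ u : ℤ → ℝ)) j = lam j * (u : ℤ → ℝ) j)
    (hdecomp : ((Linv * LqcfE N K φF φ2F : Module.End ℝ ↥(Usub N))
          : ↥(Usub N) →ₗ[ℝ] ↥(Usub N))
        = V.toLinearMap ∘ₗ Λ ∘ₗ V.symm.toLinearMap)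
    (hspec : ∀ μ : ℝ,
        ((Finset.Icc (-(N : ℤ) + 1) ((N : ℤ) - 1)).filter (fun j => lam j = μ)).card
          = Module.finrank ℝ ↥(LinearMap.ker (T - μ • LapE N)))
    (m : ℕ) (r0 : ↥(Usub N)) :
    sInf {x : ℝ | ∃ p : Polynomial ℝ, p.natDegree ≤ m ∧ p.eval 0 = 1 ∧
        x = norm1 N ((Polynomial.aeval (Linv * LqcfE N K φF φ2F) p (Linv r0) : ℤ → ℝ))}
      ≤ 2 * (opNormE N (V.trans Lhalf).toLinearMap
              * opNormE N (V.trans Lhalf).symm.toLinearMap)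
        * ((1 - Real.sqrt ((φF + 4 * φ2F) / φF))
            / (1 + Real.sqrt ((φF + 4 * φ2F) / φF))) ^ m
        * norm1 N ((Linv r0 : ℤ → ℝ)) := by
  have hhalf : ∀ u, Lhalf (Lhalf u) = LapE N u := fun u => by
    have := LinearMap.congr_fun hLhalf_sq u
    simpa using this
  have henergy : ∀ v : ↥(Usub N),
      normE N ((Lhalf v : ↥(Usub N)) : ℤ → ℝ) ^ 2
        = eps N * ∑ l ∈ Icc (-(N : ℤ) + 1) (N : ℤ), (D1 N (v : ℤ → ℝ) l) ^ 2 := fun v => by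
    rw [normE_sq hN, ← ipE_lap, ← hhalf, hLhalf_sym (Lhalf v) v]
  have hnorm1 : ∀ v : ↥(Usub N),
      norm1 N (v : ℤ → ℝ) = normE N ((Lhalf v : ↥(Usub N)) : ℤ → ℝ) := fun v => by
    unfold norm1
    rw [← henergy, Real.sqrt_sq (normE_nonneg _ _)]
  have hlam : ∀ j ∈ Icc (-(N : ℤ) + 1) ((N : ℤ) - 1), φF + 4 * φ2F ≤ lam j ∧ lam j ≤ φF := by
    intro j hj
    -- Equality of multiplicities makes the eigenspace of `lam j` nontrivial.
    have hcard := hspec (lam j)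
    have hpos : 0 < ((Finset.Icc (-(N : ℤ) + 1) ((N : ℤ) - 1)).filter
        (fun i => lam i = lam j)).card :=
      Finset.card_pos.2 ⟨j, Finset.mem_filter.2 ⟨hj, rfl⟩⟩
    rw [hcard] at hpos
    have hne : LinearMap.ker (T - lam j • LapE N) ≠ ⊥ := by
      intro hbot
      rw [hbot, finrank_bot] at hpos
      exact lt_irrefl _ hpos
    obtain ⟨v, hv, hv0⟩ := Submodule.exists_mem_ne_zero_of_ne_bot hne
    have hTv : T v = lam j • LapE N v := by
      rw [LinearMap.mem_ker, LinearMap.sub_apply, LinearMap.smul_apply, sub_eq_zero] at hv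
      exact hv
    have hB := hT v v
    have hsm : ipE N ((lam j • LapE N v : ↥(Usub N)) : ℤ → ℝ) (v : ℤ → ℝ)
        = lam j * ipE N ((LapE N v : ↥(Usub N)) : ℤ → ℝ) (v : ℤ → ℝ) := by
      simp only [ipE, Submodule.coe_smul, Pi.smul_apply, smul_eq_mul, mul_assoc, ← mul_sum]
      ring
    rw [hTv, hsm, ipE_lap] at hB
    have hE : 0 < eps N * ∑ l ∈ Icc (-(N : ℤ) + 1) (N : ℤ), (D1 N (v : ℤ → ℝ) l) ^ 2 := by
      rw [← henergy]
      exact pow_pos (normE_pos hN (by simpa using hv0)) 2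
    obtain ⟨h1, h2⟩ := Bqnl_bounds N K hN hK2 φF φ2F h2F (v : ℤ → ℝ)
    rw [← hB] at h1 h2
    exact ⟨le_of_mul_le_mul_right h1 hE, le_of_mul_le_mul_right h2 hE⟩
  obtain ⟨p, hpd, hp0, hpb⟩ := exists_cheb (φF + 4 * φ2F) φF hAF (by linarith) m
  set c := 2 * ((1 - Real.sqrt ((φF + 4 * φ2F) / φF))
    / (1 + Real.sqrt ((φF + 4 * φ2F) / φF))) ^ m with hc
  have hc0 : 0 ≤ c := (abs_nonneg _).trans (hpb φF (by linarith) le_rfl)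
  refine le_trans (csInf_le ?_ ⟨p, hpd, hp0, rfl⟩) ?_
  · refine ⟨0, ?_⟩
    rintro x ⟨_, _, _, rfl⟩
    exact Real.sqrt_nonneg _
  set w := Linv r0 with hw
  have hG : ∀ u, (Linv * LqcfE N K φF φ2F : Module.End ℝ ↥(Usub N)) u
      = V (Λ (V.symm u)) := fun u => LinearMap.congr_fun hdecomp u
  rw [hnorm1, hnorm1, aeval_conj _ Λ V hG p w]
  set y := V.symm w with hy
  have h1 := normE_le_opNormE hN (V.trans Lhalf).toLinearMap (Polynomial.aeval Λ p y)
  have h2 := normE_diag_le hN y (Polynomial.aeval Λ p y) c hc0 (fun j => p.eval (lam j))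
    (fun j hj => hpb _ (hlam j hj).1 (hlam j hj).2) (fun j => aeval_diag Λ lam hΛdiag p y j)
  have h3 := normE_le_opNormE hN (V.trans Lhalf).symm.toLinearMap (Lhalf w)
  have hy' : (V.trans Lhalf).symm.toLinearMap (Lhalf w) = y := by simp [hy]
  rw [hy'] at h3
  have hW := opNormE_nonneg N (V.trans Lhalf).toLinearMap
  calc normE N ((Lhalf (V (Polynomial.aeval Λ p y)) : ↥(Usub N)) : ℤ → ℝ)
      ≤ opNormE N (V.trans Lhalf).toLinearMap
        * (c * (opNormE N (V.trans Lhalf).symm.toLinearMap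
          * normE N ((Lhalf w : ↥(Usub N)) : ℤ → ℝ))) :=
        h1.trans (mul_le_mul_of_nonneg_left (h2.trans (mul_le_mul_of_nonneg_left h3 hc0)) hW)
    _ = _ := by rw [hc]; ring


end
end

section
/- For all real numbers 0 < a ≤ b and every m ∈ ℕ, inf{ max_{x ∈ [a,b]} |p(x)| : p a real polynomial, deg p ≤ m, p(0) = 1 } ≤ 2 ((1 − √(a/b)) / (1 + √(a/b)))^m. -/
/-!
The bound is witnessed by an explicit competitor. For `a < b` the affine map
`t ↦ (b + a - 2 t) / (b - a)` sends `[a, b]` onto `[-1, 1]` and `0` to `y = (b + a) / (b - a)`.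
The polynomial `p(t) = T_m((b + a - 2 t) / (b - a)) / T_m(y)`, with `T_m` the Chebyshev polynomial,
satisfies `p(0) = 1` and `|p| ≤ 1 / T_m(y)` on `[a, b]`. Writing `s = √(a/b)` and
`q = (1 - s) / (1 + s)`, one has `y = (1 + s²) / (1 - s²) = (q + q⁻¹) / 2 = cosh (log q)`,
so `T_m(y) = (q ^ m + q⁻¹ ^ m) / 2 ≥ q⁻¹ ^ m / 2` (`eval_T_add_inv_div_two`), and therefore
`|p| ≤ 2 q ^ m`. In the degenerate case `a = b` the polynomial `(1 - t / a) ^ m` suffices.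
-/

open Polynomial in
/-- The Joukowski form of the Chebyshev polynomials, from `T_n (cosh θ) = cosh (n θ)` at
`θ = log q`. -/
lemma eval_T_add_inv_div_two (m : ℕ) {q : ℝ} (hq : 0 < q) :
    (Chebyshev.T ℝ m).eval ((q + q⁻¹) / 2) = (q ^ m + (q ^ m)⁻¹) / 2 := by
  rw [← Real.cosh_log hq, Chebyshev.T_real_cosh, Int.cast_natCast, ← Real.log_pow,
    Real.cosh_log (pow_pos hq m)]

open Polynomial in
lemma exists_polynomial_bound (a b : ℝ) (ha : 0 < a) (hab : a ≤ b) (m : ℕ) :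
    ∃ p : ℝ[X], p.natDegree ≤ m ∧ p.eval 0 = 1 ∧ ∀ t ∈ Set.Icc a b,
      |p.eval t| ≤ 2 * ((1 - Real.sqrt (a / b)) / (1 + Real.sqrt (a / b))) ^ m := by
  rcases hab.eq_or_lt with rfl | hlt
  · refine ⟨(C (-a⁻¹) * X + C 1) ^ m, ?_, by simp, ?_⟩
    · simpa using natDegree_pow_le_of_le m (natDegree_linear_le (a := -a⁻¹) (b := 1))
    · rintro t ⟨h1, h2⟩
      obtain rfl : t = a := le_antisymm h2 h1
      rcases m with _ | m <;> simp [ha.ne']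
  · have hb : 0 < b := ha.trans hlt
    have hba : 0 < b - a := sub_pos.2 hlt
    set s := Real.sqrt (a / b) with hs
    have hs0 : 0 ≤ s := Real.sqrt_nonneg _
    have hs2 : s ^ 2 = a / b := Real.sq_sqrt (by positivity)
    have hs1 : s < 1 := by
      rw [hs, Real.sqrt_lt' one_pos, one_pow]
      exact (div_lt_one hb).2 hlt
    have h1s : 0 < 1 - s := sub_pos.2 hs1
    set q := (1 - s) / (1 + s) with hq
    have hq0 : 0 < q := by positivity
    have hy : (b + a) / (b - a) = (q + q⁻¹) / 2 := by
      have hA : a = s ^ 2 * b := by rw [hs2]; field_simp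
      have h3 : b - s ^ 2 * b ≠ 0 := by rw [← hA]; exact hba.ne'
      have h4 : (1 : ℝ) - s ^ 2 ≠ 0 := by
        intro h; apply h3; linear_combination b * h
      rw [hq, hA, inv_div]
      have h5 : 1 - s ≠ 0 := h1s.ne'
      have h6 : 1 + s ≠ 0 := by positivity
      field_simp
      ring
    set V := (Chebyshev.T ℝ m).eval ((b + a) / (b - a)) with hV
    have hVq : V = (q ^ m + (q ^ m)⁻¹) / 2 := by
      rw [hV, hy, eval_T_add_inv_div_two m hq0]
    have hqm : 0 < q ^ m := pow_pos hq0 m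
    have hV0 : 0 < V := by rw [hVq]; positivity
    have hVinv : V⁻¹ ≤ 2 * q ^ m := by
      have h : (2 * q ^ m)⁻¹ ≤ V := by
        rw [hVq, mul_inv]; linarith
      exact inv_le_of_inv_le₀ (by positivity) h
    refine ⟨C V⁻¹ * (Chebyshev.T ℝ m).comp (C (-2 / (b - a)) * X + C ((b + a) / (b - a))),
      ?_, ?_, ?_⟩
    · refine (natDegree_C_mul_le _ _).trans (natDegree_comp_le.trans ?_)
      rw [Chebyshev.natDegree_T, Int.natAbs_natCast]
      exact (Nat.mul_le_mul_left m natDegree_linear_le).trans (mul_one m).le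
    · simp [← hV, hV0.ne']
    · rintro t ⟨h1, h2⟩
      have hx : |-2 / (b - a) * t + (b + a) / (b - a)| ≤ 1 := by
        have : -2 / (b - a) * t + (b + a) / (b - a) = (b + a - 2 * t) / (b - a) := by ring
        rw [this, abs_div, abs_of_pos hba, div_le_one hba, abs_le]
        constructor <;> linarith
      have hT := Chebyshev.abs_eval_T_real_le_one m hx
      simp only [eval_mul, eval_C, eval_comp, eval_add, eval_X, abs_mul]
      rw [abs_of_pos (inv_pos.2 hV0)]
      exact (mul_le_of_le_one_right (inv_pos.2 hV0).le hT).trans hVinv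

/-- Chebyshev min-max bound: for 0 < a ≤ b and m ∈ ℕ, the best uniform bound on [a,b]
among real polynomials of degree ≤ m normalized by p(0) = 1 satisfies
inf_p max_{x∈[a,b]} |p(x)| ≤ 2 ((1 − √(a/b))/(1 + √(a/b)))^m. -/
theorem stmt15 (a b : ℝ) (ha : 0 < a) (hab : a ≤ b) (m : ℕ) :
    sInf {x : ℝ | ∃ p : Polynomial ℝ, p.natDegree ≤ m ∧ p.eval 0 = 1 ∧
        x = sSup ((fun t : ℝ => |p.eval t|) '' Set.Icc a b)}
      ≤ 2 * ((1 - Real.sqrt (a / b)) / (1 + Real.sqrt (a / b))) ^ m := by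
  obtain ⟨p, hdeg, hp0, hp⟩ := exists_polynomial_bound a b ha hab m
  refine le_trans (csInf_le ?_ ⟨p, hdeg, hp0, rfl⟩)
    (csSup_le ((Set.nonempty_Icc.2 hab).image _) (Set.forall_mem_image.2 hp))
  refine ⟨0, ?_⟩
  rintro _ ⟨r, -, -, rfl⟩
  exact Real.sSup_nonneg (Set.forall_mem_image.2 fun t _ => abs_nonneg _)
end
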